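/- arXiv:1203.4925 — 2 statements merged into one kernel-verified Lean document; each statement's English description precedes it below -/
import Mathlib

section
/- Suppose char K ≠ 2. Let F, d : T → T be K-linear maps such that F(x*y + y*x) = F(x)*y + F(y)*x + x*d(y) + y*d(x) for all x, y ∈ T (F is a generalized Jordan derivation of T with associated map d). Then F is a generalized derivation: there exists a K-linear map d' : T → T with d'(x*y) = d'(x)*y + x*d'(y) for all x, y ∈ T (a derivation) such that F(x*y) = F(x)*y + x*d'(y) for all x, y ∈ T. -/
/-!
Setting `y = 1` and then `x = y = 1` in the hypothesis gives `d 1 = 0` and `F x = F 1 * x + d x`,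
and substituting this back shows that `d` is a Jordan derivation:
`d (x * y + y * x) = d x * y + x * d y + d y * x + y * d x`. Once `d` is known to be a derivation,
`F (x * y) = F 1 * x * y + d x * y + x * d y = F x * y + x * d y`, so `d' = d` works.

That a Jordan derivation of `UT K n` is a derivation (`jordan_isDerivation`) rests on the Peirce
decomposition for the diagonal matrix units `p i`. Subtracting the inner derivation given by
`s = ∑ i, d (p i) * p i` makes `d` vanish on every `p i`. Then `d` commutes with each operator
`x ↦ p i * x + x * p i`, hence (as `p j * x * p i = 0` for `i < j`) with each Peirce projection
`x ↦ p i * x * p j` (`jordan_peirce`). It remains to treat products of an element of the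
`(i, j)` block with one of the `(j, l)` block: for `i < j < l` the reversed product vanishes, so the
Jordan identity is the Leibniz rule; if `i = j` or `j = l`, one factor is a multiple of an
idempotent killed by `d` (`jordan_peirce_mul`).
-/

set_option synthInstance.maxHeartbeats 1000000
set_option maxHeartbeats 1000000

/-- The subalgebra of upper triangular matrices in `Matrix (Fin n) (Fin n) K`. -/
def UT (K : Type*) [Field K] (n : ℕ) : Subalgebra K (Matrix (Fin n) (Fin n) K) where
  carrier := {M | M.BlockTriangular id}
  mul_mem' := fun ha hb => ha.mul hb
  add_mem' := fun ha hb => ha.add hb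
  algebraMap_mem' := fun r i j hij => by
    rw [Matrix.algebraMap_matrix_apply, if_neg]
    intro h
    subst h
    exact lt_irrefl _ hij

/-- For a Jordan derivation `d` and `s = ∑ i, d (p i) * p i`, the commutator with `s` agrees with
`d` on each of the orthogonal idempotents `p i`. -/
theorem jordan_inner {K A ι : Type*} [Field K] [Ring A] [Algebra K A] [Fintype ι]
    [LinearOrder ι] (h2 : (2 : K) ≠ 0) (p : ι → A) (hpp : ∀ i, p i * p i = p i)
    (hpq : ∀ i j, i ≠ j → p i * p j = 0) (hsum : ∑ i, p i = 1)
    (d : A →ₗ[K] A)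
    (hd : ∀ x y, d (x * y + y * x) = d x * y + x * d y + d y * x + y * d x) (k : ι) :
    (∑ i, d (p i) * p i) * p k - p k * (∑ i, d (p i) * p i) = d (p k) := by
  have half : ∀ u v : A, u + u = v + v → u = v := by
    intro u v h
    have h' : (2 : K) • u = (2 : K) • v := by rw [two_smul, two_smul, h]
    exact smul_right_injective A h2 h'
  have h1 : d (p k) = d (p k) * p k + p k * d (p k) := by
    apply half
    have := hd (p k) (p k)
    rw [hpp, map_add] at this
    rw [this]; abel
  have h0 : p k * d (p k) * p k = 0 := by
    have := congrArg (fun z => p k * z * p k) h1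
    simp only [mul_add, add_mul] at this
    have e1 : p k * (d (p k) * p k) * p k = p k * d (p k) * p k := by
      simp only [mul_assoc, hpp]
    have e2 : p k * (p k * d (p k)) * p k = p k * d (p k) * p k := by
      rw [← mul_assoc, hpp]
    rw [e1, e2] at this
    simpa using this
  have hoff : ∀ i, i ≠ k → p k * (d (p i) * p i) = - (p k * d (p k) * p i) := by
    intro i hi
    have := hd (p k) (p i)
    rw [hpq _ _ hi, hpq _ _ hi.symm, add_zero, map_zero] at this
    have := congrArg (fun z => p k * z * p i) this
    simp only [mul_add, add_mul, mul_zero, zero_mul] at this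
    have e1 : p k * (d (p k) * p i) * p i = p k * d (p k) * p i := by
      simp only [mul_assoc, hpp]
    have e2 : p k * (p k * d (p i)) * p i = p k * (d (p i) * p i) := by
      rw [← mul_assoc, hpp, mul_assoc]
    have e3 : p k * (d (p i) * p k) * p i = 0 := by
      simp only [mul_assoc, hpq _ _ hi.symm, mul_zero]
    have e4 : p k * (p i * d (p k)) * p i = 0 := by
      rw [← mul_assoc, hpq _ _ hi.symm, zero_mul, zero_mul]
    rw [e1, e2, e3, e4, add_zero, add_zero] at this
    exact eq_neg_of_add_eq_zero_right this.symm
  have hA : (∑ i, d (p i) * p i) * p k = d (p k) * p k := by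
    rw [Finset.sum_mul, Finset.sum_eq_single k]
    · rw [mul_assoc, hpp]
    · intro i _ hi
      rw [mul_assoc, hpq _ _ hi, mul_zero]
    · simp
  have hB : p k * (∑ i, d (p i) * p i) = - (p k * d (p k)) := by
    have : ∀ i, p k * (d (p i) * p i) = - (p k * d (p k) * p i) := by
      intro i
      by_cases hi : i = k
      · subst hi; rw [← mul_assoc, h0, neg_zero]
      · exact hoff i hi
    rw [Finset.mul_sum, Finset.sum_congr rfl (fun i _ => this i), Finset.sum_neg_distrib,
      ← Finset.mul_sum, hsum, mul_one]
  rw [hA, hB, sub_neg_eq_add, ← h1]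

theorem jordan_peirce {K A ι : Type*} [Field K] [Ring A] [Algebra K A]
    [LinearOrder ι] (h2 : (2 : K) ≠ 0) (p : ι → A) (hpp : ∀ i, p i * p i = p i)
    (hpq : ∀ i j, i ≠ j → p i * p j = 0)
    (htri : ∀ i j x, i < j → p j * x * p i = 0)
    (d : A →ₗ[K] A)
    (hd : ∀ x y, d (x * y + y * x) = d x * y + x * d y + d y * x + y * d x)
    (h0 : ∀ i, d (p i) = 0) (i j : ι) (x : A) :
    d (p i * x * p j) = p i * d x * p j := by
  have hJ : ∀ i x, d (p i * x + x * p i) = p i * d x + d x * p i := by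
    intro i x
    rw [hd, h0]; simp
  have hne : ∀ x, i ≠ j → p i * (p j * x + x * p j) + (p j * x + x * p j) * p i
      = p i * x * p j + p j * x * p i := by
    intro x hij
    have e1 : p i * (p j * x) = 0 := by rw [← mul_assoc, hpq _ _ hij, zero_mul]
    have e2 : x * p j * p i = 0 := by rw [mul_assoc, hpq _ _ hij.symm, mul_zero]
    rw [mul_add, add_mul, e1, e2, zero_add, add_zero, ← mul_assoc]
  rcases lt_trichotomy i j with h | h | h
  · have := hJ i (p j * x + x * p j)
    rw [hJ j, hne _ h.ne, hne _ h.ne, htri i j _ h, htri i j _ h, add_zero, add_zero] at this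
    exact this
  · subst h
    -- The square of `J x = p i * x + x * p i` is `J x + 2 * (p i * x * p i)`.
    have hsq : ∀ x, p i * (p i * x + x * p i) + (p i * x + x * p i) * p i
        = (p i * x + x * p i) + (2 : K) • (p i * x * p i) := by
      intro x
      have e1 : p i * (p i * x) = p i * x := by rw [← mul_assoc, hpp]
      have e2 : x * p i * p i = x * p i := by rw [mul_assoc, hpp]
      rw [mul_add, add_mul, e1, e2, two_smul, ← mul_assoc]
      abel
    have := hJ i (p i * x + x * p i)
    rw [hsq, map_add, hJ, hsq, map_smul] at this
    exact smul_right_injective A h2 (add_left_cancel this)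
  · rw [htri _ _ _ h, htri _ _ _ h, map_zero]

theorem jordan_peirce_mul {K A ι : Type*} [Field K] [Ring A] [Algebra K A]
    [LinearOrder ι] (h2 : (2 : K) ≠ 0) (p : ι → A) (hpp : ∀ i, p i * p i = p i)
    (hpq : ∀ i j, i ≠ j → p i * p j = 0)
    (htri : ∀ i j x, i < j → p j * x * p i = 0)
    (hdiag : ∀ i x, ∃ c : K, p i * x * p i = c • p i)
    (d : A →ₗ[K] A)
    (hd : ∀ x y, d (x * y + y * x) = d x * y + x * d y + d y * x + y * d x)
    (h0 : ∀ i, d (p i) = 0) (i j l : ι) (x y : A) :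
    d ((p i * x * p j) * (p j * y * p l)) =
      d (p i * x * p j) * (p j * y * p l) + (p i * x * p j) * d (p j * y * p l) := by
  have hP := jordan_peirce h2 p hpp hpq htri d hd h0
  have e1 : ∀ i l (y : A), p i * (p i * y * p l) = p i * y * p l := by
    intro i l y; simp only [← mul_assoc, hpp]
  have e2 : ∀ i l (y : A), (p i * y * p l) * p l = p i * y * p l := by
    intro i l y; simp only [mul_assoc, hpp]
  rcases lt_trichotomy i j with h | h | h
  · rcases lt_trichotomy j l with h' | h' | h'
    · have hil : p l * p i = 0 := hpq _ _ (h.trans h').ne'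
      have e3 : ∀ u v : A, (p j * u * p l) * (p i * v * p j) = 0 := by
        intro u v
        have : (p j * u * p l) * (p i * v * p j) = p j * u * (p l * p i) * (v * p j) := by
          simp only [mul_assoc]
        rw [this, hil, mul_zero, zero_mul]
      have := hd (p i * x * p j) (p j * y * p l)
      rw [hP i j, hP j l, e3, e3, e3, add_zero, add_zero, add_zero] at this
      rw [hP i j, hP j l, this]
    · subst h'
      obtain ⟨c, hc⟩ := hdiag j y
      rw [hc, map_smul, h0, smul_zero, mul_zero, add_zero, mul_smul_comm, mul_smul_comm,
        map_smul, e2, hP, e2]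
    · rw [htri _ _ y h']; simp
  · subst h
    obtain ⟨c, hc⟩ := hdiag i x
    rw [hc, map_smul, h0, smul_zero, zero_mul, zero_add, smul_mul_assoc, smul_mul_assoc,
      map_smul, e1, hP, e1]
  · rw [htri _ _ x h]; simp

/-- A Jordan derivation vanishing on a complete triangular family of idempotents is a
derivation. -/
theorem jordan_isDerivation_of_idempotents {K A ι : Type*} [Field K] [Ring A] [Algebra K A]
    [Fintype ι] [LinearOrder ι] (h2 : (2 : K) ≠ 0) (p : ι → A) (hpp : ∀ i, p i * p i = p i)
    (hpq : ∀ i j, i ≠ j → p i * p j = 0) (hsum : ∑ i, p i = 1)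
    (htri : ∀ i j x, i < j → p j * x * p i = 0)
    (hdiag : ∀ i x, ∃ c : K, p i * x * p i = c • p i)
    (d : A →ₗ[K] A)
    (hd : ∀ x y, d (x * y + y * x) = d x * y + x * d y + d y * x + y * d x)
    (h0 : ∀ i, d (p i) = 0) (x y : A) : d (x * y) = d x * y + x * d y := by
  have hP := jordan_peirce h2 p hpp hpq htri d hd h0
  have hM := jordan_peirce_mul h2 p hpp hpq htri hdiag d hd h0
  have ext : ∀ u v : A, (∀ i l, p i * u * p l = p i * v * p l) → u = v := by
    intro u v h
    have : ∀ u : A, u = ∑ i, ∑ l, p i * u * p l := by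
      intro u
      simp only [← Finset.mul_sum, hsum, mul_one, ← Finset.sum_mul, one_mul]
    rw [this u, this v]
    simp only [h]
  have split : ∀ (i l : ι) (u v : A),
      p i * (u * v) * p l = ∑ j, (p i * u * p j) * (p j * v * p l) := by
    intro i l u v
    have : ∀ j, (p i * u * p j) * (p j * v * p l) = (p i * u) * p j * (v * p l) := by
      intro j
      calc _ = (p i * u) * (p j * p j) * (v * p l) := by simp only [mul_assoc]
        _ = _ := by rw [hpp]
    simp only [this, ← Finset.sum_mul, ← Finset.mul_sum, hsum, mul_one]
    simp only [mul_assoc]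
  apply ext
  intro i l
  rw [← hP, split, map_sum, mul_add, add_mul, split, split, ← Finset.sum_add_distrib]
  refine Finset.sum_congr rfl fun j _ => ?_
  rw [hM, hP, hP]

/-- A Jordan derivation of an algebra that is triangular with one-dimensional diagonal blocks with
respect to a complete family of orthogonal idempotents is a derivation. -/
theorem jordan_isDerivation {K A ι : Type*} [Field K] [Ring A] [Algebra K A]
    [Fintype ι] [LinearOrder ι] (h2 : (2 : K) ≠ 0) (p : ι → A) (hpp : ∀ i, p i * p i = p i)
    (hpq : ∀ i j, i ≠ j → p i * p j = 0) (hsum : ∑ i, p i = 1)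
    (htri : ∀ i j x, i < j → p j * x * p i = 0)
    (hdiag : ∀ i x, ∃ c : K, p i * x * p i = c • p i)
    (d : A →ₗ[K] A)
    (hd : ∀ x y, d (x * y + y * x) = d x * y + x * d y + d y * x + y * d x)
    (x y : A) : d (x * y) = d x * y + x * d y := by
  have hs := jordan_inner h2 p hpp hpq hsum d hd
  generalize (∑ i, d (p i) * p i) = s at hs
  let D : A →ₗ[K] A := d - (LinearMap.mulLeft K s - LinearMap.mulRight K s)
  have hD : ∀ x, D x = d x - (s * x - x * s) := fun x => rfl
  have := jordan_isDerivation_of_idempotents h2 p hpp hpq hsum htri hdiag D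
    (by intro x y; rw [hD, hD, hD, hd]; noncomm_ring)
    (by intro i; rw [hD, hs, sub_self]) x y
  rw [hD, hD, hD, sub_eq_iff_eq_add] at this
  rw [this]; noncomm_ring

/-- The diagonal matrix unit `e_{ii}` as an element of `UT K n`. -/
def diagUnit (K : Type*) [Field K] (n : ℕ) (i : Fin n) : UT K n :=
  ⟨Matrix.single i i 1, by
    intro a b hab
    rw [Matrix.single_apply, if_neg]
    rintro ⟨rfl, rfl⟩
    exact lt_irrefl _ hab⟩

theorem generalized_jordan_derivation_is_generalized_derivation
    {K : Type*} [Field K] {n : ℕ} (hn : 0 < n)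
    (hchar : ringChar K ≠ 2)
    (F d : UT K n →ₗ[K] UT K n)
    (hF : ∀ x y : UT K n, F (x * y + y * x) = F x * y + F y * x + x * d y + y * d x) :
    ∃ d' : UT K n →ₗ[K] UT K n,
      (∀ x y : UT K n, d' (x * y) = d' x * y + x * d' y) ∧
      (∀ x y : UT K n, F (x * y) = F x * y + x * d' y) := by
  have h2 : (2 : K) ≠ 0 := Ring.two_ne_zero hchar
  have hd1 : d 1 = 0 := by
    have := hF 1 1
    simp only [mul_one, one_mul, map_add] at this
    rw [add_assoc, left_eq_add, ← two_smul K] at this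
    exact (smul_eq_zero.mp this).resolve_left h2
  have hFd : ∀ x, F x = F 1 * x + d x := by
    intro x
    have := hF x 1
    simp only [mul_one, one_mul, map_add, hd1, mul_zero, add_zero] at this
    rw [add_assoc] at this
    exact add_left_cancel this
  have hd : ∀ x y, d (x * y + y * x) = d x * y + x * d y + d y * x + y * d x := by
    intro x y
    have := hF x y
    rw [hFd (x * y + y * x), hFd x, hFd y, ← eq_sub_iff_add_eq'] at this
    rw [this]; noncomm_ring
  have hder := jordan_isDerivation h2 (diagUnit K n)
    (by intro i; apply Subtype.ext; simp [diagUnit])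
    (by intro i j hij; apply Subtype.ext; simp [diagUnit, hij])
    (by
      apply Subtype.ext
      rw [AddSubmonoidClass.coe_finsetSum]
      simp only [diagUnit]
      ext a b
      simp [Matrix.sum_apply, Matrix.single_apply, Matrix.one_apply, ite_and])
    (by
      intro i j x hij
      apply Subtype.ext
      have : x.1 j i = 0 := x.2 hij
      simp [diagUnit, this])
    (by
      intro i x
      refine ⟨x.1 i i, ?_⟩
      apply Subtype.ext
      simp [diagUnit])
    d hd
  refine ⟨d, hder, fun x y => ?_⟩
  rw [hFd (x * y), hFd x, hder]; noncomm_ring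
end

section
/- For every Lie derivation Θ : T → T there exists a K-linear derivation D : T → T (D(x*y) = D(x)*y + x*D(y) for all x, y ∈ T) such that Θ(x) = D(x) for every strictly upper triangular x ∈ T, i.e. for every x ∈ T with x i i = 0 for all i (the span of the images of the nontrivial paths of the A_n quiver). -/
set_option synthInstance.maxHeartbeats 1000000
set_option maxHeartbeats 1000000

/-!
Every Lie derivation `Θ` of the upper triangular matrices agrees on the strictly upper triangular
ones with an inner derivation `x ↦ M * x - x * M`.

* Applying `Θ` to `[e_ii, e_jj] = 0` shows that the off-diagonal part of `Θ e_ii` is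
  `[B, e_ii]`, where `B` is the strictly upper triangular matrix with entries
  `B k l = (Θ e_ll) k l` (`lie_diag_entry`). Hence `Ψ = Θ - [B, ·]` is a Lie derivation that sends
  every `e_ii` to a diagonal matrix.
* Applying `Ψ` to `[e_kk, e_kl] = e_kl` and `[e_ll, e_kl] = -e_kl` for `k < l` shows that `Ψ e_kl`
  is a multiple `c k l` of `e_kl` (`lie_unit_entry`). The first relation kills all other entries
  except those in row `k` and, in characteristic two, in column `k`; the second one kills these,
  the entry `(l, k)` being zero by triangularity.
* Applying `Ψ` to `[e_kl, e_lm] = e_km` gives `c k m = c k l + c l m`, so that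
  `c k l = g l - g k` with `g k = c 0 k` and `g 0 = 0`. Therefore `Ψ` acts on the `e_kl`, `k < l`,
  as the commutator with `-diag g`, and `M = B - diag g`.
-/

namespace UT

open Matrix

variable {K : Type*} [Field K] {n : ℕ}

theorem apply_eq_zero (x : UT K n) {i j : Fin n} (h : j < i) :
    (x : Matrix (Fin n) (Fin n) K) i j = 0 := x.2 h

/-- The matrix unit `e_ij` as an upper triangular matrix; it is replaced by `0` when `j < i`. -/
def unit (K : Type*) [Field K] {n : ℕ} (i j : Fin n) : UT K n :=
  ⟨fun a b => if i ≤ j ∧ a = i ∧ b = j then 1 else 0, by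
    intro a b hab
    have hab' : b < a := hab
    show (if i ≤ j ∧ a = i ∧ b = j then (1 : K) else 0) = 0
    rw [if_neg]
    rintro ⟨h, rfl, rfl⟩
    exact absurd hab' (not_lt.2 h)⟩

theorem unit_apply (i j a b : Fin n) :
    (unit K i j : Matrix (Fin n) (Fin n) K) a b = if i ≤ j ∧ a = i ∧ b = j then 1 else 0 := rfl

theorem mul_unit_apply (x : UT K n) {i j : Fin n} (h : i ≤ j) (a b : Fin n) :
    ((x * unit K i j : UT K n) : Matrix (Fin n) (Fin n) K) a b =
      if b = j then (x : Matrix (Fin n) (Fin n) K) a i else 0 := by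
  rw [MulMemClass.coe_mul, Matrix.mul_apply]
  simp only [unit_apply, h, true_and]
  by_cases hb : b = j <;> simp [hb]

theorem unit_mul_apply (x : UT K n) {i j : Fin n} (h : i ≤ j) (a b : Fin n) :
    ((unit K i j * x : UT K n) : Matrix (Fin n) (Fin n) K) a b =
      if a = i then (x : Matrix (Fin n) (Fin n) K) j b else 0 := by
  rw [MulMemClass.coe_mul, Matrix.mul_apply]
  simp only [unit_apply, h, true_and]
  by_cases hb : a = i <;> simp [hb]

theorem ext_apply {x y : UT K n}
    (h : ∀ i j, (x : Matrix (Fin n) (Fin n) K) i j = (y : Matrix (Fin n) (Fin n) K) i j) :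
    x = y := Subtype.ext (Matrix.ext h)

theorem eq_sum_unit (x : UT K n) :
    x = ∑ i, ∑ j, (x : Matrix (Fin n) (Fin n) K) i j • unit K i j := by
  apply ext_apply
  intro a b
  simp only [AddSubmonoidClass.coe_finsetSum, SetLike.val_smul, Matrix.sum_apply,
    Matrix.smul_apply, unit_apply, smul_eq_mul]
  rw [Finset.sum_eq_single a, Finset.sum_eq_single b]
  · rcases le_or_gt a b with h | h
    · simp [h]
    · simp [apply_eq_zero x h]
  · intro j _ hj
    simp [hj.symm]
  · simp
  · intro i _ hi
    simp [hi.symm]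
  · simp

/-- The property that a linear map on `UT K n` is a Lie derivation. -/
def IsLieDer (Θ : UT K n →ₗ[K] UT K n) : Prop :=
  ∀ x y : UT K n, Θ (x * y - y * x) = Θ x * y - y * Θ x + x * Θ y - Θ y * x

/-- The inner derivation `x ↦ M * x - x * M`. -/
def inner (M : UT K n) : UT K n →ₗ[K] UT K n := LinearMap.mulLeft K M - LinearMap.mulRight K M

theorem inner_apply (M x : UT K n) : inner M x = M * x - x * M := rfl

theorem inner_mul (M x y : UT K n) : inner M (x * y) = inner M x * y + x * inner M y := by
  simp only [inner_apply, mul_sub, sub_mul, mul_assoc]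
  abel

theorem IsLieDer.sub_inner {Θ : UT K n →ₗ[K] UT K n} (h : IsLieDer Θ) (M : UT K n) :
    IsLieDer (Θ - inner M) := by
  intro x y
  simp only [LinearMap.sub_apply, h x y, inner_apply, mul_sub, sub_mul, mul_assoc]
  abel

/-- The entry `(k, l)` of `Θ [e_ii, e_ll] = 0`: the off-diagonal entries of all the `Θ e_ii` are
determined by the entries `(Θ e_ll) k l`. -/
theorem lie_diag_entry {Θ : UT K n →ₗ[K] UT K n} (h : IsLieDer Θ) (i : Fin n) {k l : Fin n}
    (hkl : k ≠ l) :
    (Θ (unit K i i) : Matrix (Fin n) (Fin n) K) k l =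
      ((if l = i then 1 else 0) - (if k = i then 1 else 0)) *
        (Θ (unit K l l) : Matrix (Fin n) (Fin n) K) k l := by
  have hc : unit K i i * unit K l l - unit K l l * unit K i i = 0 := by
    rw [sub_eq_zero]
    apply ext_apply
    intro a b
    rw [mul_unit_apply _ le_rfl, unit_mul_apply _ le_rfl, unit_apply, unit_apply]
    grind
  have h1 := h (unit K i i) (unit K l l)
  rw [hc, map_zero] at h1
  have h2 := congrArg (fun z : UT K n => (z : Matrix (Fin n) (Fin n) K) k l) h1
  simp only [AddSubgroupClass.coe_sub, AddMemClass.coe_add, Matrix.sub_apply, Matrix.add_apply,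
    mul_unit_apply _ le_rfl, unit_mul_apply _ le_rfl, ZeroMemClass.coe_zero,
    Matrix.zero_apply] at h2
  grind

/-- If a Lie derivation maps the `e_ii` to diagonal matrices, then it maps each `e_kl`, `k < l`, to
a multiple of itself. -/
theorem lie_unit_entry {Ψ : UT K n →ₗ[K] UT K n} (h : IsLieDer Ψ)
    (hd : ∀ i a b : Fin n, a ≠ b → (Ψ (unit K i i) : Matrix (Fin n) (Fin n) K) a b = 0)
    {k l : Fin n} (hkl : k < l) :
    Ψ (unit K k l) = (Ψ (unit K k l) : Matrix (Fin n) (Fin n) K) k l • unit K k l := by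
  apply ext_apply
  intro p q
  rw [SetLike.val_smul, Matrix.smul_apply, unit_apply, smul_eq_mul]
  by_cases hpq : p = k ∧ q = l
  · obtain ⟨rfl, rfl⟩ := hpq
    simp [hkl.le]
  have hk : unit K k k * unit K k l - unit K k l * unit K k k = unit K k l := by
    apply ext_apply
    intro a b
    rw [AddSubgroupClass.coe_sub, Matrix.sub_apply, mul_unit_apply _ le_rfl,
      mul_unit_apply _ hkl.le]
    simp only [unit_apply]
    grind
  have hl : unit K l l * unit K k l - unit K k l * unit K l l = - unit K k l := by
    apply ext_apply
    intro a b
    rw [AddSubgroupClass.coe_sub, Matrix.sub_apply, mul_unit_apply _ le_rfl,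
      mul_unit_apply _ hkl.le, NegMemClass.coe_neg, Matrix.neg_apply]
    simp only [unit_apply]
    grind
  have h1 := h (unit K k k) (unit K k l)
  have h2 := h (unit K l l) (unit K k l)
  rw [hk] at h1
  rw [hl, map_neg] at h2
  have h1' := congrArg (fun z : UT K n => (z : Matrix (Fin n) (Fin n) K) p q) h1
  have h2' := congrArg (fun z : UT K n => (z : Matrix (Fin n) (Fin n) K) p q) h2
  simp only [AddSubgroupClass.coe_sub, AddMemClass.coe_add, Matrix.sub_apply, Matrix.add_apply,
    NegMemClass.coe_neg, Matrix.neg_apply,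
    mul_unit_apply _ le_rfl, unit_mul_apply _ le_rfl, mul_unit_apply _ hkl.le,
    unit_mul_apply _ hkl.le] at h1' h2'
  have e1 := hd k p k
  have e2 := hd k l q
  have e3 := hd l p k
  have e4 := hd l l q
  have e5 := apply_eq_zero (Ψ (unit K k l)) hkl
  grind

/-- The eigenvalues of a Lie derivation on the `e_kl`, `k < l`, are additive along paths. -/
theorem lie_coeff_add {Ψ : UT K n →ₗ[K] UT K n} (h : IsLieDer Ψ) {c : Fin n → Fin n → K}
    (hc : ∀ k l, k < l → Ψ (unit K k l) = c k l • unit K k l) {k l m : Fin n} (hkl : k < l)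
    (hlm : l < m) : c k m = c k l + c l m := by
  have hu : unit K k l * unit K l m - unit K l m * unit K k l = unit K k m := by
    apply ext_apply
    intro a b
    rw [AddSubgroupClass.coe_sub, Matrix.sub_apply, mul_unit_apply _ hkl.le,
      mul_unit_apply _ hlm.le]
    simp only [unit_apply]
    grind
  have h1 := h (unit K k l) (unit K l m)
  rw [hu, hc k m (hkl.trans hlm), hc k l hkl, hc l m hlm] at h1
  have h2 := congrArg (fun z : UT K n => (z : Matrix (Fin n) (Fin n) K) k m) h1
  simp only [AddSubgroupClass.coe_sub, AddMemClass.coe_add, Matrix.sub_apply, Matrix.add_apply,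
    smul_mul_assoc, mul_smul_comm, SetLike.val_smul, Matrix.smul_apply, smul_eq_mul,
    mul_unit_apply _ hkl.le, mul_unit_apply _ hlm.le, unit_apply] at h2
  grind

end UT

open UT in
theorem lie_derivation_agrees_with_derivation_on_strictly_upper
    {K : Type*} [Field K] {n : ℕ} (hn : 0 < n)
    (Θ : UT K n →ₗ[K] UT K n)
    (hL : ∀ x y : UT K n, Θ (x * y - y * x) = Θ x * y - y * Θ x + x * Θ y - Θ y * x) :
    ∃ D : UT K n →ₗ[K] UT K n,
      (∀ x y : UT K n, D (x * y) = D x * y + x * D y) ∧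
      (∀ x : UT K n, (∀ i : Fin n, (x : Matrix (Fin n) (Fin n) K) i i = 0) → Θ x = D x) := by
  have hΘ : IsLieDer Θ := hL
  let B : UT K n := ⟨fun k l => (Θ (unit K l l) : Matrix (Fin n) (Fin n) K) k l,
    fun k l hkl => apply_eq_zero (Θ (unit K l l)) hkl⟩
  have hB : ∀ k l, (B : Matrix (Fin n) (Fin n) K) k l =
    (Θ (unit K l l) : Matrix (Fin n) (Fin n) K) k l := fun _ _ => rfl
  let Ψ := Θ - inner B
  have hΨ : IsLieDer Ψ := hΘ.sub_inner B
  have hd : ∀ i a b : Fin n, a ≠ b →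
      (Ψ (unit K i i) : Matrix (Fin n) (Fin n) K) a b = 0 := by
    intro i a b hab
    have h := lie_diag_entry hΘ i hab
    simp only [Ψ, LinearMap.sub_apply, inner_apply, AddSubgroupClass.coe_sub, Matrix.sub_apply,
      mul_unit_apply _ le_rfl, unit_mul_apply _ le_rfl, hB]
    grind
  let c : Fin n → Fin n → K := fun k l => (Ψ (unit K k l) : Matrix (Fin n) (Fin n) K) k l
  have hc : ∀ k l, k < l → Ψ (unit K k l) = c k l • unit K k l :=
    fun k l hkl => lie_unit_entry hΨ hd hkl
  let z : Fin n := ⟨0, hn⟩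
  let g : Fin n → K := fun k => if k = z then 0 else c z k
  have hg : ∀ k l, k < l → c k l = g l - g k := by
    intro k l hkl
    have hz : ∀ m, m ≠ z → z < m := fun m hm =>
      lt_of_le_of_ne (Fin.mk_le_of_le_val (Nat.zero_le _)) hm.symm
    have hl : l ≠ z := by
      rintro rfl
      exact absurd hkl (Nat.not_lt_zero _)
    by_cases hk : k = z
    · simp [g, hk, hl]
    · simp [g, hk, hl, lie_coeff_add hΨ hc (hz k hk) hkl]
  let G : UT K n := ⟨Matrix.diagonal g, Matrix.blockTriangular_diagonal g⟩
  refine ⟨inner (B - G), inner_mul _, fun x hx => ?_⟩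
  have key : ∀ k l, k < l → Θ (unit K k l) = inner (B - G) (unit K k l) := by
    intro k l hkl
    have h1 : Ψ (unit K k l) = unit K k l * G - G * unit K k l := by
      rw [hc k l hkl, hg k l hkl]
      apply ext_apply
      intro a b
      rw [AddSubgroupClass.coe_sub, Matrix.sub_apply, mul_unit_apply _ hkl.le,
        unit_mul_apply _ hkl.le, SetLike.val_smul, Matrix.smul_apply, unit_apply]
      simp only [G, Matrix.diagonal_apply, smul_eq_mul]
      grind
    have h2 : Θ (unit K k l) = Ψ (unit K k l) + inner B (unit K k l) := by
      simp [Ψ]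
    rw [h2, h1, inner_apply, inner_apply, sub_mul, mul_sub]
    abel
  rw [eq_sum_unit x]
  simp only [map_sum, map_smul]
  refine Finset.sum_congr rfl fun k _ => Finset.sum_congr rfl fun l _ => ?_
  rcases lt_trichotomy k l with h | rfl | h
  · rw [key k l h]
  · rw [hx, zero_smul, zero_smul]
  · rw [apply_eq_zero x h, zero_smul, zero_smul]
end
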